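/- Let n ≥ 2, d ≥ 2 and m = Nat.choose (n + d − 1) (d − 1), and let Sym denote the symmetric subspace of EuclideanSpace ℂ (Fin n → Fin d). Then: (a) there exists a subspace G ⊆ Sym with finrank G = m − d such that every nonzero vector of G is genuinely multipartite entangled; and (b) every subspace V ⊆ Sym with finrank V = m − d + 1 contains a nonzero vector that is not GME (indeed, a nonzero fully product vector). Hence the maximum dimension of a GES contained in the symmetric subspace is m − d. -/

import Mathlib

/-- A vector of the `n`-qudit space is *fully product* if it is a simple tensor. -/
def FullyProduct {n d : ℕ} (ψ : EuclideanSpace ℂ (Fin n → Fin d)) : Prop :=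
  ∃ φ : Fin n → Fin d → ℂ, ∀ i, ψ i = ∏ j, φ j (i j)

/-- `ψ` is biseparable across the bipartition `(S, Sᶜ)` of the `n` qudits. -/
def Biseparable {n d : ℕ} (S : Set (Fin n))
    (ψ : EuclideanSpace ℂ (Fin n → Fin d)) : Prop :=
  ∃ (φ : ((j : S) → Fin d) → ℂ) (χ : ((j : ↥Sᶜ) → Fin d) → ℂ),
    ∀ i, ψ i = φ (fun j => i j.val) * χ (fun j => i j.val)

/-- A nonzero vector is genuinely multipartite entangled if it is not biseparable
across any nontrivial bipartition. -/
def GME {n d : ℕ} (ψ : EuclideanSpace ℂ (Fin n → Fin d)) : Prop :=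
  ψ ≠ 0 ∧ ∀ S : Set (Fin n), S ≠ ∅ → S ≠ Set.univ → ¬ Biseparable S ψ

/-- A vector is *symmetric* if it is invariant under all permutations of the parties. -/
def SymmetricVec {n d : ℕ} (ψ : EuclideanSpace ℂ (Fin n → Fin d)) : Prop :=
  ∀ (σ : Equiv.Perm (Fin n)) (i : Fin n → Fin d), ψ (i ∘ σ) = ψ i

/-!
A symmetric vector that is biseparable across some bipartition and has a nonzero amplitude at a
basis index `i` also has one at each constant index built from an entry of `i`: invariance lets
any two parties be placed on opposite sides of the bipartition, and the product form then allows
the level of one of them to be copied onto the other. So the symmetric vectors that vanish at the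
`d` constant indices form a genuinely entangled subspace of codimension `d`. Conversely, the tensor
powers `x ⊗ ⋯ ⊗ x` are the image of a polynomial map on `ℂ^d`; fewer than `d` linear conditions on
them are fewer than `d` polynomials vanishing at the origin, which by Krull's height theorem have
another common zero.
-/

open Module MvPolynomial

section CommonZeros

variable {K ι : Type*} [Field K]

theorem height_vanishingIdeal_singleton_congr (x y : ι → K) :
    (vanishingIdeal K {x}).height = (vanishingIdeal K {y}).height := by
  let τ : MvPolynomial ι K ≃ₐ[K] MvPolynomial ι K :=
    AlgEquiv.ofAlgHom (aeval fun i => X i + C (x i - y i)) (aeval fun i => X i - C (x i - y i))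
      (by ext; simp) (by ext; simp)
  have hτ : ((aeval y).comp τ.toAlgHom : MvPolynomial ι K →ₐ[K] K) = aeval x := by
    ext i
    simp [τ]
  have hcomap : vanishingIdeal K {x} = (vanishingIdeal K {y}).comap τ.toRingEquiv := by
    ext f
    simp only [mem_vanishingIdeal_singleton_iff, Ideal.mem_comap, ← hτ]
    rfl
  rw [hcomap, RingEquiv.height_comap]

variable [IsAlgClosed K] [Finite ι]

theorem height_vanishingIdeal_singleton (x : ι → K) :
    (vanishingIdeal K {x}).height = Nat.card ι := by
  have hdim : ringKrullDim (MvPolynomial ι K) = Nat.card ι := by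
    rw [MvPolynomial.ringKrullDim_of_isNoetherianRing, ringKrullDim_eq_zero_of_field, zero_add]
  have hle : (vanishingIdeal K {x}).height ≤ ringKrullDim (MvPolynomial ι K) :=
    Ideal.height_le_ringKrullDim_of_ne_top (Ideal.IsPrime.ne_top inferInstance)
  have hge : ringKrullDim (MvPolynomial ι K) ≤ (vanishingIdeal K {x}).height := by
    rw [ringKrullDim_le_iff_isMaximal_height_le]
    intro M hM
    obtain ⟨y, rfl⟩ := eq_vanishingIdeal_singleton_of_isMaximal K hM
    exact_mod_cast (height_vanishingIdeal_singleton_congr y x).le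
  exact_mod_cast (hle.antisymm hge).trans hdim

theorem natCard_le_ncard_of_zeroLocus_span_eq_singleton {s : Set (MvPolynomial ι K)}
    (hs : s.Finite) {x : ι → K} (hx : zeroLocus K (Ideal.span s) = {x}) :
    Nat.card ι ≤ s.ncard := by
  have hmin : vanishingIdeal K {x} ∈ (Ideal.span s).minimalPrimes := by
    rw [← Ideal.radical_minimalPrimes, ← vanishingIdeal_zeroLocus_eq_radical (K := K), hx,
      Ideal.minimalPrimes_eq_subsingleton_self]
    rfl
  have hle := Ideal.height_le_card_of_mem_minimalPrimes_span hs hmin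
  rw [height_vanishingIdeal_singleton] at hle
  exact_mod_cast hle

theorem exists_ne_forall_eval_eq_zero {κ : Type*} [Finite κ] (p : κ → MvPolynomial ι K)
    (hκ : Nat.card κ < Nat.card ι) {x : ι → K} (hx : ∀ k, eval x (p k) = 0) :
    ∃ y ≠ x, ∀ k, eval y (p k) = 0 := by
  by_contra! hne
  have hzero : zeroLocus K (Ideal.span (Set.range p)) = {x} := by
    ext y
    simp only [zeroLocus_span, Set.forall_mem_range, Set.mem_ofPred_eq,
      Set.mem_singleton_iff]
    refine ⟨fun hy => ?_, fun hyx => hyx ▸ hx⟩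
    by_contra hyx
    obtain ⟨k, hk⟩ := hne y hyx
    exact hk (hy k)
  have hcard := natCard_le_ncard_of_zeroLocus_span_eq_singleton (Set.finite_range p) hzero
  have hrange : (Set.range p).ncard ≤ Nat.card κ := Finite.card_range_le p
  omega

end CommonZeros

/-- A map from an affine space to a module is a *polynomial map* if it becomes a polynomial
function after composition with any linear functional. Quantifying over functionals instead of
coordinates avoids a choice of basis. -/
def IsPolynomialMap {K ι E : Type*} [CommSemiring K] [AddCommMonoid E] [Module K E]
    (F : (ι → K) → E) : Prop :=
  ∀ ℓ : Dual K E, ∃ p : MvPolynomial ι K, ∀ x, ℓ (F x) = eval x p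

namespace IsPolynomialMap

variable {K ι E : Type*}

theorem of_basis [CommSemiring K] [AddCommMonoid E] [Module K E] {κ : Type*} [Finite κ]
    (b : Basis κ K E) {F : (ι → K) → E}
    (hF : ∀ k, ∃ p : MvPolynomial ι K, ∀ x, b.repr (F x) k = eval x p) : IsPolynomialMap F := by
  have := Fintype.ofFinite κ
  choose p hp using hF
  refine fun ℓ => ⟨∑ k, C (ℓ (b k)) * p k, fun x => ?_⟩
  conv_lhs => rw [← b.sum_repr (F x)]
  simp [hp, mul_comm]

theorem exists_ne_zero_mem [Field K] [IsAlgClosed K] [Finite ι] [AddCommGroup E] [Module K E]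
    {F : (ι → K) → E} (hF : IsPolynomialMap F) (h0 : F 0 = 0) {U V : Submodule K E}
    [FiniteDimensional K U] (hFU : ∀ x, F x ∈ U) (hVU : V ≤ U)
    (hcodim : finrank K U < finrank K V + Nat.card ι) : ∃ x ≠ 0, F x ∈ V := by
  let b := finBasis K (U ⧸ V.submoduleOf U)
  have hextend (k) : ∃ ℓ : Dual K E, ∀ u : U, ℓ u = b.coord k ((V.submoduleOf U).mkQ u) := by
    obtain ⟨ℓ, hℓ⟩ := LinearMap.exists_extend (b.coord k ∘ₗ (V.submoduleOf U).mkQ)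
    exact ⟨ℓ, LinearMap.congr_fun hℓ⟩
  choose ℓ hℓ using hextend
  choose p hp using fun k => hF (ℓ k)
  have hcard : Nat.card (Fin (finrank K (U ⧸ V.submoduleOf U))) < Nat.card ι := by
    have hquot := (V.submoduleOf U).finrank_quotient_add_finrank
    rw [(Submodule.submoduleOfEquivOfLe hVU).finrank_eq] at hquot
    rw [Nat.card_fin]
    omega
  obtain ⟨x, hx, hpx⟩ := exists_ne_forall_eval_eq_zero p hcard (x := 0) fun k => by
    rw [← hp, h0, map_zero]
  have hquot : (V.submoduleOf U).mkQ ⟨F x, hFU x⟩ = 0 :=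
    b.forall_coord_eq_zero_iff.1 fun k => by rw [← hℓ, hp, hpx]
  have hmem : ⟨F x, hFU x⟩ ∈ V.submoduleOf U := (Submodule.Quotient.mk_eq_zero _).1 hquot
  exact ⟨x, hx, hmem⟩

end IsPolynomialMap

section TupleMultiset

variable {n : ℕ} {α : Type*}

/-- The multiset of the entries of a tuple. The fibres of this map are the orbits of tuples under
permutation of their positions, so it parametrizes the amplitudes of a symmetric vector. -/
def symOfTuple (i : Fin n → α) : Sym α n :=
  ⟨Finset.univ.val.map i, by simp⟩

theorem symOfTuple_surjective : Function.Surjective (symOfTuple : (Fin n → α) → Sym α n) := by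
  rintro ⟨⟨l⟩, hl⟩
  obtain rfl : l.length = n := hl
  exact ⟨l.get, Sym.ext (by simp [symOfTuple, Fin.univ_val_map])⟩

theorem symOfTuple_eq_symOfTuple_iff {i j : Fin n → α} :
    symOfTuple i = symOfTuple j ↔ ∃ σ : Equiv.Perm (Fin n), i ∘ σ = j := by
  classical
  constructor
  · intro hij
    have hcount (a : α) : Fintype.card {x // j x = a} = Fintype.card {x // i x = a} := by
      have := congrArg (fun s : Sym α n => (s : Multiset α).count a) hij
      simpa only [symOfTuple, Sym.coe_mk, Multiset.count_map, Fintype.card_subtype,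
        Finset.card_def, Finset.filter_val, eq_comm] using this.symm
    exact ⟨Equiv.ofFiberEquiv fun a => Fintype.equivOfCardEq (hcount a),
      funext (Equiv.ofFiberEquiv_map _)⟩
  · rintro ⟨σ, rfl⟩
    refine Sym.ext ?_
    simp only [symOfTuple, Sym.coe_mk]
    rw [← Multiset.map_map, Multiset.map_univ_val_equiv]

end TupleMultiset

section SymmetricSubspace

variable {n d : ℕ}

/-- The symmetric subspace of `⊗^n ℂ^d`. -/
def symmetricSubspace (n d : ℕ) : Submodule ℂ (EuclideanSpace ℂ (Fin n → Fin d)) where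
  carrier := {ψ | SymmetricVec ψ}
  zero_mem' := fun _ _ => rfl
  add_mem' := fun hψ hφ σ i => by simp [hψ σ i, hφ σ i]
  smul_mem' := fun c ψ hψ σ i => by simp [hψ σ i]

@[simp]
theorem mem_symmetricSubspace {ψ : EuclideanSpace ℂ (Fin n → Fin d)} :
    ψ ∈ symmetricSubspace n d ↔ SymmetricVec ψ := Iff.rfl

/-- The vector whose amplitude at a basis index is the value of a given function at the multiset of
entries of the index; these are the symmetric vectors in occupation-number coordinates. -/
def symmetricEmbedding (n d : ℕ) :
    (Sym (Fin d) n → ℂ) →ₗ[ℂ] EuclideanSpace ℂ (Fin n → Fin d) :=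
  (WithLp.linearEquiv 2 ℂ ((Fin n → Fin d) → ℂ)).symm.toLinearMap ∘ₗ
    LinearMap.funLeft ℂ ℂ symOfTuple

theorem symmetricEmbedding_injective : Function.Injective (symmetricEmbedding n d) :=
  (WithLp.linearEquiv 2 ℂ _).symm.injective.comp
    (LinearMap.funLeft_injective_of_surjective ℂ ℂ _ symOfTuple_surjective)

theorem range_symmetricEmbedding :
    LinearMap.range (symmetricEmbedding n d) = symmetricSubspace n d := by
  ext ψ
  constructor
  · rintro ⟨g, rfl⟩ σ i
    exact congrArg g (symOfTuple_eq_symOfTuple_iff.2 ⟨σ, rfl⟩).symm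
  · intro hψ
    have hfactor : Function.FactorsThrough ψ.ofLp symOfTuple := fun i j hij => by
      obtain ⟨σ, rfl⟩ := symOfTuple_eq_symOfTuple_iff.1 hij
      exact (hψ σ i).symm
    obtain ⟨g, hg⟩ := (Function.factorsThrough_iff _).1 hfactor
    exact ⟨g, (WithLp.linearEquiv 2 ℂ _).injective hg.symm⟩

theorem finrank_symmetricSubspace : finrank ℂ (symmetricSubspace n d) = d.multichoose n := by
  rw [← range_symmetricEmbedding, LinearMap.finrank_range_of_inj symmetricEmbedding_injective,
    finrank_fintype_fun_eq_card, Sym.card_sym_eq_multichoose, Fintype.card_fin]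

end SymmetricSubspace

section TensorPower

variable {n d : ℕ}

/-- The symmetric product vector `x ⊗ ⋯ ⊗ x` with `n` factors. -/
noncomputable def tensorPower (n : ℕ) {d : ℕ} (x : Fin d → ℂ) :
    EuclideanSpace ℂ (Fin n → Fin d) :=
  WithLp.toLp 2 fun i => ∏ j, x (i j)

@[simp]
theorem tensorPower_apply (x : Fin d → ℂ) (i : Fin n → Fin d) :
    tensorPower n x i = ∏ j, x (i j) := rfl

theorem tensorPower_mem_symmetricSubspace (x : Fin d → ℂ) :
    tensorPower n x ∈ symmetricSubspace n d := fun σ i =>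
  Equiv.prod_comp σ fun j => x (i j)

theorem fullyProduct_tensorPower (x : Fin d → ℂ) : FullyProduct (tensorPower n x) :=
  ⟨fun _ => x, fun _ => rfl⟩

theorem tensorPower_zero (hn : n ≠ 0) : tensorPower n (0 : Fin d → ℂ) = 0 := by
  ext i
  simp [hn]

theorem tensorPower_ne_zero {x : Fin d → ℂ} (hx : x ≠ 0) : tensorPower n x ≠ 0 := by
  obtain ⟨k, hk⟩ := Function.ne_iff.1 hx
  intro h
  have hpow : x k ^ n = 0 := by simpa using congrArg (fun ψ => ψ fun _ => k) h
  exact pow_ne_zero n hk hpow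

theorem isPolynomialMap_tensorPower :
    IsPolynomialMap (tensorPower n : (Fin d → ℂ) → EuclideanSpace ℂ (Fin n → Fin d)) :=
  .of_basis (EuclideanSpace.basisFun (Fin n → Fin d) ℂ).toBasis fun i =>
    ⟨∏ j, X (i j), fun x => by simp⟩

theorem exists_ne_zero_tensorPower_mem (hn : n ≠ 0)
    {V : Submodule ℂ (EuclideanSpace ℂ (Fin n → Fin d))} (hV : V ≤ symmetricSubspace n d)
    (hcodim : finrank ℂ (symmetricSubspace n d) < finrank ℂ V + d) :
    ∃ x ≠ 0, tensorPower n x ∈ V :=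
  isPolynomialMap_tensorPower.exists_ne_zero_mem (tensorPower_zero hn)
    tensorPower_mem_symmetricSubspace hV (by rwa [Nat.card_fin])

end TensorPower

section OffDiagonal

variable {n d : ℕ}

/-- The amplitudes of a symmetric vector at the constant basis indices `|k ⋯ k⟩`. -/
def diagonalAmplitudes (n d : ℕ) : symmetricSubspace n d →ₗ[ℂ] Fin d → ℂ where
  toFun ψ k := (ψ : EuclideanSpace ℂ (Fin n → Fin d)) fun _ => k
  map_add' _ _ := rfl
  map_smul' _ _ := rfl

@[simp]
theorem diagonalAmplitudes_apply (ψ : symmetricSubspace n d) (k : Fin d) :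
    diagonalAmplitudes n d ψ k = (ψ : EuclideanSpace ℂ (Fin n → Fin d)) fun _ => k := rfl

theorem diagonalAmplitudes_surjective (hn : n ≠ 0) :
    Function.Surjective (diagonalAmplitudes n d) := by
  intro c
  refine ⟨∑ k, c k • ⟨tensorPower n (Pi.single k 1), tensorPower_mem_symmetricSubspace _⟩, ?_⟩
  ext l
  simp [Pi.single_apply, hn]

/-- The symmetric vectors with no amplitude at the constant basis indices, the genuinely entangled
subspace of largest dimension exhibited here. -/
def offDiagonalSubspace (n d : ℕ) : Submodule ℂ (EuclideanSpace ℂ (Fin n → Fin d)) :=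
  (diagonalAmplitudes n d).ker.map (symmetricSubspace n d).subtype

theorem mem_offDiagonalSubspace {ψ : EuclideanSpace ℂ (Fin n → Fin d)} :
    ψ ∈ offDiagonalSubspace n d ↔ SymmetricVec ψ ∧ ∀ k, ψ (fun _ => k) = 0 := by
  simp [offDiagonalSubspace, funext_iff, and_comm]

theorem finrank_offDiagonalSubspace_add (hn : n ≠ 0) :
    finrank ℂ (offDiagonalSubspace n d) + d = finrank ℂ (symmetricSubspace n d) := by
  have hrank := (diagonalAmplitudes n d).finrank_range_add_finrank_ker
  rw [LinearMap.range_eq_top.2 (diagonalAmplitudes_surjective hn), finrank_top,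
    finrank_fin_fun] at hrank
  rw [offDiagonalSubspace, Submodule.finrank_map_subtype_eq, add_comm, hrank]

end OffDiagonal

section Entanglement

variable {n d : ℕ} {ψ : EuclideanSpace ℂ (Fin n → Fin d)} {S : Set (Fin n)}

theorem FullyProduct.biseparable (h : FullyProduct ψ) (S : Set (Fin n)) : Biseparable S ψ := by
  classical
  obtain ⟨φ, hφ⟩ := h
  refine ⟨fun i => ∏ j : S, φ j (i j), fun i => ∏ j : ↥Sᶜ, φ j (i j), fun i => ?_⟩
  rw [hφ, ← Fintype.prod_subtype_mul_prod_subtype (· ∈ S)]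
  rfl

theorem FullyProduct.not_gme (h : FullyProduct ψ) (hn : 2 ≤ n) : ¬ GME ψ := fun hgme => by
  have : Nontrivial (Fin n) := Fin.nontrivial_iff_two_le.2 hn
  exact hgme.2 {⟨0, by omega⟩} (Set.singleton_ne_empty _) (Set.singleton_ne_univ _)
    (h.biseparable _)

theorem Biseparable.apply_piecewise_ne_zero [DecidablePred (· ∈ S)] (hb : Biseparable S ψ)
    {i i' : Fin n → Fin d} (hi : ψ i ≠ 0) (hi' : ψ i' ≠ 0) : ψ (S.piecewise i i') ≠ 0 := by
  obtain ⟨φ, χ, hφχ⟩ := hb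
  rw [hφχ] at hi hi' ⊢
  convert mul_ne_zero (left_ne_zero_of_mul hi) (right_ne_zero_of_mul hi') using 3
  · ext ⟨j, hj⟩
    simp [hj]
  · ext ⟨j, hj⟩
    simp [Set.piecewise_eq_of_notMem S i i' hj]

namespace SymmetricVec

theorem apply_update_ne_zero_of_mem_of_notMem (h : SymmetricVec ψ) (hb : Biseparable S ψ)
    {s t : Fin n} (hs : s ∈ S) (ht : t ∉ S) {i : Fin n → Fin d} (hi : ψ i ≠ 0) :
    ψ (Function.update i t (i s)) ≠ 0 := by
  classical
  have hswap : ψ (i ∘ Equiv.swap s t) ≠ 0 := by rwa [h]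
  have hpiecewise : Function.update i t (i s) = S.piecewise i (i ∘ Equiv.swap s t) := by
    ext j
    by_cases hj : j ∈ S
    · have hjt : j ≠ t := fun e => ht (e ▸ hj)
      simp [hj, hjt]
    · have hjs : j ≠ s := fun e => hj (e ▸ hs)
      obtain rfl | hjt := eq_or_ne j t
      · simp [hj]
      · simp [hj, hjt, Equiv.swap_apply_of_ne_of_ne hjs hjt]
  rw [hpiecewise]
  exact hb.apply_piecewise_ne_zero hi hswap

theorem apply_update_ne_zero (h : SymmetricVec ψ) (hb : Biseparable S ψ) (hS : S ≠ ∅)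
    (hS' : S ≠ Set.univ) {i : Fin n → Fin d} (hi : ψ i ≠ 0) (p q : Fin n) :
    ψ (Function.update i q (i p)) ≠ 0 := by
  obtain rfl | hpq := eq_or_ne p q
  · simpa using hi
  obtain ⟨s, hs⟩ := Set.nonempty_iff_ne_empty.2 hS
  obtain ⟨t, ht⟩ := (Set.ne_univ_iff_exists_notMem S).1 hS'
  have hst : s ≠ t := fun e => ht (e ▸ hs)
  obtain ⟨σ, hσ⟩ := Equiv.Perm.exists_extending_pair ![s, t] ![p, q]
    (by simpa using hst) (by simpa using hpq)
  obtain rfl : σ s = p := hσ 0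
  obtain rfl : σ t = q := hσ 1
  have hi' : ψ (i ∘ σ) ≠ 0 := by rwa [h]
  rw [← h σ, Function.update_comp_equiv, Equiv.symm_apply_apply]
  exact h.apply_update_ne_zero_of_mem_of_notMem hb hs ht hi'

theorem apply_const_ne_zero (h : SymmetricVec ψ) (hb : Biseparable S ψ) (hS : S ≠ ∅)
    (hS' : S ≠ Set.univ) {i : Fin n → Fin d} (hi : ψ i ≠ 0) (p : Fin n) :
    ψ (fun _ => i p) ≠ 0 := by
  have hpiecewise (T : Finset (Fin n)) : ψ (T.piecewise (fun _ => i p) i) ≠ 0 := by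
    induction T using Finset.induction_on with
    | empty => simpa using hi
    | insert q T _ ih =>
      have hp : T.piecewise (fun _ => i p) i p = i p := by simp [Finset.piecewise]
      have hupdate := h.apply_update_ne_zero hb hS hS' ih p q
      rwa [hp, ← Finset.piecewise_insert] at hupdate
  simpa using hpiecewise Finset.univ

theorem gme_of_const_eq_zero (h : SymmetricVec ψ) (hψ : ψ ≠ 0)
    (hconst : ∀ k, ψ (fun _ => k) = 0) : GME ψ := by
  refine ⟨hψ, fun S hS hS' hb => hψ ?_⟩
  ext i
  by_contra hi
  obtain ⟨p, -⟩ := Set.nonempty_iff_ne_empty.2 hS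
  exact h.apply_const_ne_zero hb hS hS' hi p (hconst (i p))

end SymmetricVec

end Entanglement

/-- Theorem 5: the maximum dimension of a genuinely entangled subspace contained in
the symmetric subspace of `⊗^n ℂ^d` is `m − d`, where
`m = (n + d − 1).choose (d − 1)`. -/
theorem max_dim_symmetric_GES (n d : ℕ) (hn : 2 ≤ n) (hd : 2 ≤ d)
    (m : ℕ) (hm : m = Nat.choose (n + d - 1) (d - 1)) :
    (∃ G : Submodule ℂ (EuclideanSpace ℂ (Fin n → Fin d)),
        (∀ ψ ∈ G, SymmetricVec ψ) ∧ Module.finrank ℂ ↥G = m - d ∧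
        ∀ ψ ∈ G, ψ ≠ 0 → GME ψ) ∧
    (∀ V : Submodule ℂ (EuclideanSpace ℂ (Fin n → Fin d)),
        (∀ ψ ∈ V, SymmetricVec ψ) → Module.finrank ℂ ↥V = m - d + 1 →
        ∃ ψ ∈ V, ψ ≠ 0 ∧ FullyProduct ψ ∧ ¬ GME ψ) := by
  have hn0 : n ≠ 0 := by omega
  have hSym : finrank ℂ (symmetricSubspace n d) = m := by
    rw [finrank_symmetricSubspace, Nat.multichoose_eq, hm, add_comm d n]
    exact Nat.choose_symm_of_eq_add (by omega)
  have hG : finrank ℂ (offDiagonalSubspace n d) + d = m :=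
    (finrank_offDiagonalSubspace_add hn0).trans hSym
  refine ⟨⟨offDiagonalSubspace n d, fun ψ hψ => (mem_offDiagonalSubspace.1 hψ).1, by omega,
    fun ψ hψ hψ0 => ?_⟩, fun V hV hVrank => ?_⟩
  · obtain ⟨hsymm, hconst⟩ := mem_offDiagonalSubspace.1 hψ
    exact hsymm.gme_of_const_eq_zero hψ0 hconst
  · obtain ⟨x, hx, hxV⟩ := exists_ne_zero_tensorPower_mem hn0 (V := V) hV (by omega)
    have hprod : FullyProduct (tensorPower n x) := fullyProduct_tensorPower x
    exact ⟨tensorPower n x, hxV, tensorPower_ne_zero hx, hprod, hprod.not_gme hn⟩
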